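/- arXiv:2102.07486 — 2 statements merged into one kernel-verified Lean document; each statement's English description precedes it below -/
import Mathlib

section
/- Let A and B be two 0,1-matrices. Suppose that there exist two families of 0,1-matrices, M = {M_1, …, M_s} (each of the dimensions of A) and N = {N_1, …, N_s} (each of the dimensions of B), such that every ⌈s/2⌉ matrices of M cover A and every ⌈s/2⌉ matrices of N cover B. Then R_B(A ⊗ B) ≤ Σ_{t=1}^{s} R_B(M_t) · R_B(N_t). In particular, if every ⌈s/2⌉ matrices of M cover A, then R_B(A ⊗ A) ≤ Σ_{t=1}^{s} R_B(M_t)². -/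
/-!
Fix a 1-entry `(i, j)` of `A`. The set of `t` with `M t i j = 1` meets every set of `⌈s/2⌉`
indices, so its complement has fewer than `⌈s/2⌉` elements; the same holds for a 1-entry of `B`
and the family `N`. Since `2 (⌈s/2⌉ - 1) < s` whenever `s` is positive, the two complements
cannot exhaust the indices, and some `t` is good for both entries; for `s = 0` the empty family
forces both matrices to vanish. Hence the `M t ⊗ N t` cover
`A ⊗ B`, and it remains to write each of them as the union of the `RB (M t) * RB (N t)` Kronecker
products of rectangles from optimal covers of its factors.
-/

/-- A collection of `s` Boolean matrices covers `A` if `A` has a 1 exactly where some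
matrix of the collection has a 1. -/
def BCovers {α β : Type*} {s : ℕ} (M : Fin s → Matrix α β Bool) (A : Matrix α β Bool) : Prop :=
  ∀ i j, A i j = true ↔ ∃ t, M t i j = true

/-- A nonzero Boolean matrix whose 1-entries form a combinatorial rectangle. -/
def IsRank1 {α β : Type*} (M : Matrix α β Bool) : Prop :=
  (∃ i j, M i j = true) ∧ ∃ u : α → Bool, ∃ v : β → Bool, ∀ i j, M i j = (u i && v j)

/-- The Boolean rank of a 0,1-matrix: the smallest `s` such that `A` is the entrywise
Boolean sum (OR) of `s` matrices of Boolean rank 1. -/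
noncomputable def RB {α β : Type*} (A : Matrix α β Bool) : ℕ :=
  sInf {s | ∃ M : Fin s → Matrix α β Bool, (∀ t, IsRank1 (M t)) ∧ BCovers M A}

/-- The Kronecker product of Boolean matrices. -/
def bkron {α β γ δ : Type*} (A : Matrix α β Bool) (B : Matrix γ δ Bool) :
    Matrix (α × γ) (β × δ) Bool :=
  fun i j => A i.1 j.1 && B i.2 j.2

/-- The n × n matrix with zeros on the diagonal and ones everywhere else. -/
def Cmat (n : ℕ) : Matrix (Fin n) (Fin n) Bool := fun i j => decide (i ≠ j)

/-- σ(n): the smallest k with n ≤ binom(k, ⌈k/2⌉). -/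
noncomputable def sigmaFn (n : ℕ) : ℕ := sInf {k | n ≤ Nat.choose k ((k + 1) / 2)}

/-- (a₁,a₂,a₃)-coverability: three matrices of the given Boolean ranks, every two of
which cover `A`. -/
def Coverable3 {α β : Type*} (A : Matrix α β Bool) (a1 a2 a3 : ℕ) : Prop :=
  ∃ A1 A2 A3 : Matrix α β Bool,
    RB A1 ≤ a1 ∧ RB A2 ≤ a2 ∧ RB A3 ≤ a3 ∧
    (∀ i j, A i j = true ↔ (A1 i j = true ∨ A2 i j = true)) ∧
    (∀ i j, A i j = true ↔ (A1 i j = true ∨ A3 i j = true)) ∧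
    (∀ i j, A i j = true ↔ (A2 i j = true ∨ A3 i j = true))

/-- The number of 1-entries of a Boolean matrix. -/
def ones {α β : Type*} [Fintype α] [Fintype β] (A : Matrix α β Bool) : ℕ :=
  (Finset.univ.filter (fun p : α × β => A p.1 p.2 = true)).card

/-- The largest number of 1-entries in a monochromatic rectangle of ones of `A`. -/
noncomputable def maxRect {α β : Type*} [Fintype α] [Fintype β] (A : Matrix α β Bool) : ℕ :=
  sSup {c | ∃ M : Matrix α β Bool,
    IsRank1 M ∧ (∀ i j, M i j = true → A i j = true) ∧ c = ones M}

/-- A cover by rectangles indexed by any finite type bounds the Boolean rank. -/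
lemma RB_le_card {α β ι : Type*} [Fintype ι] {A : Matrix α β Bool}
    (M : ι → Matrix α β Bool) (h1 : ∀ t, IsRank1 (M t))
    (h : ∀ i j, A i j = true ↔ ∃ t, M t i j = true) : RB A ≤ Fintype.card ι := by
  refine Nat.sInf_le ⟨fun t => M ((Fintype.equivFin ι).symm t), fun t => h1 _, fun i j => ?_⟩
  rw [h i j, (Fintype.equivFin ι).symm.surjective.exists]

/-- The infimum defining the Boolean rank of a finite matrix is attained: the singletons of its
1-entries show that some rectangle cover exists. -/
lemma exists_RB_cover {α β : Type*} [Fintype α] [Fintype β] (A : Matrix α β Bool) :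
    ∃ M : Fin (RB A) → Matrix α β Bool, (∀ t, IsRank1 (M t)) ∧ BCovers M A := by
  classical
  have hne : {s | ∃ M : Fin s → Matrix α β Bool,
      (∀ t, IsRank1 (M t)) ∧ BCovers M A}.Nonempty := by
    let e := Fintype.equivFin {x : α × β // A x.1 x.2 = true}
    refine ⟨_, fun t i j => decide (i = (e.symm t).1.1) && decide (j = (e.symm t).1.2),
      fun t => ⟨⟨(e.symm t).1.1, (e.symm t).1.2, by simp⟩, fun i => decide (i = (e.symm t).1.1),
        fun j => decide (j = (e.symm t).1.2), fun i j => rfl⟩, fun i j => ?_⟩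
    constructor
    · intro h
      exact ⟨e ⟨(i, j), h⟩, by simp⟩
    · rintro ⟨t, ht⟩
      simp only [Bool.and_eq_true, decide_eq_true_eq] at ht
      rw [ht.1, ht.2]
      exact (e.symm t).2
  exact Nat.sInf_mem hne

lemma IsRank1.bkron {α β γ δ : Type*} {A : Matrix α β Bool} {B : Matrix γ δ Bool}
    (hA : IsRank1 A) (hB : IsRank1 B) : IsRank1 (bkron A B) := by
  obtain ⟨⟨i, j, hij⟩, u, v, huv⟩ := hA
  obtain ⟨⟨k, l, hkl⟩, w, z, hwz⟩ := hB
  refine ⟨⟨(i, k), (j, l), by simp [_root_.bkron, hij, hkl]⟩,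
    fun x => u x.1 && w x.2, fun y => v y.1 && z y.2, fun x y => ?_⟩
  simp only [_root_.bkron, huv, hwz]
  ac_rfl

/-- The set of indices missed by a predicate that holds somewhere on every `k`-set of indices
has fewer than `k` elements. -/
lemma card_filter_not_lt {s k : ℕ} {P : Fin s → Prop} [DecidablePred P]
    (h : ∀ T : Finset (Fin s), T.card = k → ∃ t ∈ T, P t) :
    (Finset.univ.filter fun t => ¬ P t).card < k := by
  by_contra! hk
  obtain ⟨T, hT, hc⟩ := Finset.exists_subset_card_eq hk
  obtain ⟨t, ht, hp⟩ := h T hc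
  exact (Finset.mem_filter.1 (hT ht)).2 hp

/-- Two predicates that each hold somewhere on every set of `⌈s/2⌉` indices hold simultaneously
at some index. -/
lemma exists_common {s : ℕ} {P Q : Fin s → Prop}
    (hP : ∀ T : Finset (Fin s), T.card = (s + 1) / 2 → ∃ t ∈ T, P t)
    (hQ : ∀ T : Finset (Fin s), T.card = (s + 1) / 2 → ∃ t ∈ T, Q t) : ∃ t, P t ∧ Q t := by
  classical
  by_contra! hn
  have h1 := card_filter_not_lt hP
  have h2 := card_filter_not_lt hQ
  have h3 : (Finset.univ : Finset (Fin s)) ⊆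
      (Finset.univ.filter fun t => ¬ P t) ∪ Finset.univ.filter fun t => ¬ Q t := by
    intro t _
    have := hn t
    simp only [Finset.mem_union, Finset.mem_filter, Finset.mem_univ, true_and]
    tauto
  have h4 := (Finset.card_le_card h3).trans (Finset.card_union_le _ _)
  rw [Finset.card_univ, Fintype.card_fin] at h4
  omega

/-- Each member of a family whose every `⌈s/2⌉` matrices cover `A` lies below `A`, because its
index belongs to some set of `⌈s/2⌉` indices. -/
lemma le_of_half_cover {α β : Type*} {s : ℕ} {A : Matrix α β Bool} {M : Fin s → Matrix α β Bool}
    (hM : ∀ T : Finset (Fin s), T.card = (s + 1) / 2 →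
      ∀ i j, A i j = true ↔ ∃ t ∈ T, M t i j = true)
    {t : Fin s} {i : α} {j : β} (h : M t i j = true) : A i j = true := by
  have hs := t.pos
  obtain ⟨T, hT, -, hc⟩ := Finset.exists_subsuperset_card_eq (n := (s + 1) / 2)
    (Finset.subset_univ {t}) (by rw [Finset.card_singleton]; omega)
    (by rw [Finset.card_univ, Fintype.card_fin]; omega)
  exact (hM T hc i j).2 ⟨t, hT (Finset.mem_singleton_self t), h⟩

lemma RB_bkron_le {α β γ δ : Type*} [Fintype α] [Fintype β] [Fintype γ] [Fintype δ] {s : ℕ}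
    {A : Matrix α β Bool} {B : Matrix γ δ Bool}
    {M : Fin s → Matrix α β Bool} {N : Fin s → Matrix γ δ Bool}
    (hM : ∀ T : Finset (Fin s), T.card = (s + 1) / 2 →
      ∀ i j, A i j = true ↔ ∃ t ∈ T, M t i j = true)
    (hN : ∀ T : Finset (Fin s), T.card = (s + 1) / 2 →
      ∀ i j, B i j = true ↔ ∃ t ∈ T, N t i j = true) :
    RB (bkron A B) ≤ ∑ t, RB (M t) * RB (N t) := by
  choose U hU1 hU using fun t => exists_RB_cover (M t)
  choose V hV1 hV using fun t => exists_RB_cover (N t)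
  have key := RB_le_card (A := bkron A B)
    (fun x : Σ t, Fin (RB (M t)) × Fin (RB (N t)) => bkron (U x.1 x.2.1) (V x.1 x.2.2))
    (fun x => (hU1 _ _).bkron (hV1 _ _)) ?_
  · simpa using key
  rintro ⟨i, k⟩ ⟨j, l⟩
  simp only [bkron, Bool.and_eq_true]
  constructor
  · rintro ⟨hA, hB⟩
    obtain ⟨t, h1, h2⟩ := exists_common (fun T hT => (hM T hT i j).1 hA)
      (fun T hT => (hN T hT k l).1 hB)
    obtain ⟨a, ha⟩ := (hU t i j).1 h1
    obtain ⟨b, hb⟩ := (hV t k l).1 h2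
    exact ⟨⟨t, a, b⟩, ha, hb⟩
  · rintro ⟨⟨t, a, b⟩, ha, hb⟩
    exact ⟨le_of_half_cover hM ((hU t i j).2 ⟨a, ha⟩), le_of_half_cover hN ((hV t k l).2 ⟨b, hb⟩)⟩

theorem rank_kronecker_half_covers {n m p q s : ℕ}
    (A : Matrix (Fin n) (Fin m) Bool) (B : Matrix (Fin p) (Fin q) Bool)
    (M : Fin s → Matrix (Fin n) (Fin m) Bool) (N : Fin s → Matrix (Fin p) (Fin q) Bool)
    (hM : ∀ T : Finset (Fin s), T.card = (s + 1) / 2 →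
      ∀ i j, A i j = true ↔ ∃ t ∈ T, M t i j = true)
    (hN : ∀ T : Finset (Fin s), T.card = (s + 1) / 2 →
      ∀ i j, B i j = true ↔ ∃ t ∈ T, N t i j = true) :
    RB (bkron A B) ≤ ∑ t, RB (M t) * RB (N t) ∧
    RB (bkron A A) ≤ ∑ t, RB (M t) ^ 2 := by
  refine ⟨RB_bkron_le hM hN, ?_⟩
  simpa only [sq] using RB_bkron_le hM hM
end

section
/- For all integers n, m ≥ 2, it holds that R_B(C_n ⊗ C_m) ≥ (n(n−1) / (⌈n/2⌉ · ⌊n/2⌋)) · σ(m). -/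
/-- The infimum defining `RB` is attained: the set is nonempty, since a finite matrix is the union
of its single 1-entries. -/
lemma exists_cover_RB {α β : Type*} [Finite α] [Finite β] (A : Matrix α β Bool) :
    ∃ M : Fin (RB A) → Matrix α β Bool, (∀ t, IsRank1 (M t)) ∧ BCovers M A := by
  classical
  have := Fintype.ofFinite α
  have := Fintype.ofFinite β
  apply Nat.sInf_mem
    (s := {s | ∃ M : Fin s → Matrix α β Bool, (∀ t, IsRank1 (M t)) ∧ BCovers M A})
  let e := Fintype.equivFin {p : α × β // A p.1 p.2 = true}
  refine ⟨_, fun t i j => decide (i = (e.symm t).1.1) && decide (j = (e.symm t).1.2), ?_, ?_⟩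
  · intro t
    exact ⟨⟨(e.symm t).1.1, (e.symm t).1.2, by simp⟩,
      fun i => decide (i = (e.symm t).1.1), fun j => decide (j = (e.symm t).1.2),
      fun i j => rfl⟩
  · intro i j
    constructor
    · intro h
      exact ⟨e ⟨(i, j), h⟩, by simp⟩
    · rintro ⟨t, ht⟩
      simp only [Bool.and_eq_true, decide_eq_true_eq] at ht
      rw [ht.1, ht.2]
      exact (e.symm t).2

/-- A family of rectangles `{u t} × {v t}` covering exactly the off-diagonal positions has at least
`σ(m)` members: the sets `{t | u t i}` form an antichain of size `m`, so Sperner's theorem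
applies. -/
lemma sigmaFn_le_card {m : ℕ} {T : Type*} [Fintype T] (u v : T → Fin m → Prop)
    (h0 : ∀ t i, u t i → ¬ v t i) (h : ∀ i j, i ≠ j → ∃ t, u t i ∧ v t j) :
    sigmaFn m ≤ Fintype.card T := by
  classical
  let S : Fin m → Finset T := fun i => Finset.univ.filter (fun t => u t i)
  have hS : ∀ i j, S i ⊆ S j → i = j := by
    intro i j hij
    by_contra hne
    obtain ⟨t, h1, h2⟩ := h i j hne
    have h3 : t ∈ S j := hij (by simp [S, h1])
    exact h0 t j (by simpa [S] using h3) h2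
  have hinj : Function.Injective S := fun i j hij => hS i j hij.subset
  have hanti : IsAntichain (· ⊆ ·) ((Finset.univ.image S : Finset (Finset T)) : Set (Finset T)) := by
    intro a ha b hb hab hsub
    simp only [Finset.coe_image, Finset.coe_univ, Set.image_univ, Set.mem_range] at ha hb
    obtain ⟨i, rfl⟩ := ha
    obtain ⟨j, rfl⟩ := hb
    exact hab (congrArg S (hS i j hsub))
  have hsp := hanti.sperner
  rw [Finset.card_image_of_injective _ hinj, Finset.card_univ, Fintype.card_fin] at hsp
  apply Nat.sInf_le
  -- Sperner's bound is stated with `⌊k/2⌋`, the definition of `σ` with `⌈k/2⌉`.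
  have hsymm : (Fintype.card T).choose ((Fintype.card T + 1) / 2)
      = (Fintype.card T).choose (Fintype.card T / 2) :=
    Nat.choose_symm_of_eq_add (by omega)
  exact hsp.trans hsymm.ge

lemma card_mul_card_le {n : ℕ} (X Y : Finset (Fin n)) (h : Disjoint X Y) :
    X.card * Y.card ≤ (n + 1) / 2 * (n / 2) := by
  have hc : X.card + Y.card ≤ n := by
    rw [← Finset.card_union_of_disjoint h]
    simpa using Finset.card_le_univ (X ∪ Y)
  generalize X.card = a at *
  generalize Y.card = b at *
  obtain ⟨k, hk | hk⟩ := Nat.even_or_odd' n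
  · rw [show (n + 1) / 2 = k by omega, show n / 2 = k by omega]
    nlinarith [sq_nonneg ((a : ℤ) - b), mul_self_le_mul_self (Nat.zero_le _) hc,
      four_mul_le_pow_two_add a b]
  · rw [show (n + 1) / 2 = k + 1 by omega, show n / 2 = k by omega]
    rcases le_total a k with hak | hak
    · obtain ⟨d, rfl⟩ := Nat.exists_eq_add_of_le hak
      have : b ≤ a + 2 * d + 1 := by omega
      nlinarith [Nat.mul_le_mul_left a this]
    · obtain ⟨d, rfl⟩ := Nat.exists_eq_add_of_le hak
      rcases Nat.eq_zero_or_pos d with rfl | hd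
      · nlinarith [Nat.mul_le_mul_left k (show b ≤ k + 1 by omega)]
      · have : b + d ≤ k + 1 := by omega
        nlinarith

theorem rank_kronecker_Cn_Cm_lower_bound (n m : ℕ) (hn : 2 ≤ n) (hm : 2 ≤ m) :
    ((n * (n - 1) : ℕ) : ℚ) / (((n + 1) / 2 * (n / 2) : ℕ) : ℚ) * (sigmaFn m : ℚ)
      ≤ (RB (bkron (Cmat n) (Cmat m)) : ℚ) := by
  classical
  obtain ⟨M, hM, hcov⟩ := exists_cover_RB (bkron (Cmat n) (Cmat m))
  generalize RB (bkron (Cmat n) (Cmat m)) = s at *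
  choose _ u v huv using hM
  have hone : ∀ t p q, u t p = true → v t q = true → p.1 ≠ q.1 ∧ p.2 ≠ q.2 := by
    intro t p q hp hq
    have := (hcov p q).2 ⟨t, by rw [huv, hp, hq]; rfl⟩
    simpa [bkron, Cmat] using this
  let X : Fin s → Finset (Fin n) := fun t => Finset.univ.filter (fun i => ∃ a, u t (i, a) = true)
  let Y : Fin s → Finset (Fin n) := fun t => Finset.univ.filter (fun j => ∃ b, v t (j, b) = true)
  have hXY : ∀ t, Disjoint (X t) (Y t) := by
    intro t
    rw [Finset.disjoint_left]
    intro i hi hj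
    simp only [X, Y, Finset.mem_filter, Finset.mem_univ, true_and] at hi hj
    obtain ⟨a, ha⟩ := hi
    obtain ⟨b, hb⟩ := hj
    exact (hone t _ _ ha hb).1 rfl
  have hblock : ∀ p ∈ (Finset.univ : Finset (Fin n)).offDiag,
      sigmaFn m ≤ (Finset.univ.filter (fun t => p ∈ X t ×ˢ Y t)).card := by
    rintro ⟨i, j⟩ hij
    rw [Finset.mem_offDiag] at hij
    rw [← Fintype.card_subtype]
    refine sigmaFn_le_card (fun t a => u t.1 (i, a) = true) (fun t b => v t.1 (j, b) = true)
      (fun t a h1 h2 => (hone _ _ _ h1 h2).2 rfl) ?_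
    intro a b hab
    obtain ⟨t, ht⟩ := (hcov (i, a) (j, b)).1 (by simpa [bkron, Cmat] using ⟨hij.2.2, hab⟩)
    rw [huv, Bool.and_eq_true] at ht
    exact ⟨⟨t, by simpa [X, Y] using ⟨⟨a, ht.1⟩, ⟨b, ht.2⟩⟩⟩, ht⟩
  have hcount : n * (n - 1) * sigmaFn m ≤ s * ((n + 1) / 2 * (n / 2)) := by
    calc n * (n - 1) * sigmaFn m
        = (Finset.univ : Finset (Fin n)).offDiag.card * sigmaFn m := by
          rw [Finset.offDiag_card, Finset.card_univ, Fintype.card_fin, Nat.mul_sub_one]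
      _ ≤ ∑ p ∈ (Finset.univ : Finset (Fin n)).offDiag,
            (Finset.univ.filter (fun t => p ∈ X t ×ˢ Y t)).card := by
          rw [← smul_eq_mul]
          exact Finset.card_nsmul_le_sum _ _ _ hblock
      _ = ∑ t, ((Finset.univ : Finset (Fin n)).offDiag.filter (fun p => p ∈ X t ×ˢ Y t)).card :=
          Finset.sum_card_bipartiteAbove_eq_sum_card_bipartiteBelow (fun p t => p ∈ X t ×ˢ Y t)
      _ ≤ ∑ _t : Fin s, ((n + 1) / 2 * (n / 2)) := by
          refine Finset.sum_le_sum fun t _ => le_trans ?_ (card_mul_card_le _ _ (hXY t))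
          rw [← Finset.card_product]
          exact Finset.card_le_card fun p hp => (Finset.mem_filter.1 hp).2
      _ = s * ((n + 1) / 2 * (n / 2)) := by simp
  have hpos : 0 < (n + 1) / 2 * (n / 2) := Nat.mul_pos (by omega) (by omega)
  rw [div_mul_eq_mul_div, div_le_iff₀ (by exact_mod_cast hpos)]
  exact_mod_cast hcount
end
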